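/- arXiv:1902.02378 — 2 statements merged into one kernel-verified Lean document; each statement's English description precedes it below -/
import Mathlib

section
/- Every retract of a free group F_n is closed in the pro-p topology of F_n for every prime p. -/
/-- `R` is a retract of the ambient group: there is an endomorphism with image `R`
restricting to the identity on `R` (equivalently, an idempotent endomorphism with image `R`). -/
def IsRetract {G : Type*} [Group G] (R : Subgroup G) : Prop :=
  ∃ r : G →* G, r.range = R ∧ ∀ x ∈ R, r x = x

/-- The subgroup `H` is free of rank `m`. -/
def HasFreeRank {G : Type*} [Group G] (H : Subgroup G) (m : ℕ) : Prop :=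
  ∃ φ : FreeGroup (Fin m) →* G, Function.Injective φ ∧ φ.range = H

/-- The closure of a subgroup `H` in the pro-`p` topology: the intersection of all
subgroups `H ⊔ N` (= `HN`) over normal subgroups `N` of `p`-power index. -/
def proPClosure {G : Type*} [Group G] (p : ℕ) (H : Subgroup G) : Subgroup G :=
  ⨅ N ∈ {N : Subgroup G | N.Normal ∧ ∃ k : ℕ, N.index = p ^ k}, H ⊔ N

/-!
A retract is the equalizer of the retraction and the identity, and equalizers of continuous
homomorphisms into a Hausdorff group are closed; so it suffices that free groups are Hausdorff in
the pro-`p` topology, i.e. residually finite-`p`.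

For this, write `g ≠ 1` as a reduced product of syllables `x₁ ^ e₁ ⋯ xₖ ^ eₖ` and send each
generator `x` to `1 + N x`, where `N x` has a `1` in position `(i, i + 1)` whenever `xᵢ = x`. As
neighbouring syllables differ, `N x ^ 2 = 0`, hence `x ^ e ↦ 1 + e N x`, and the corner entry of the
image of `g` is `e₁ ⋯ eₖ`. Modulo a high power of `p` this is nonzero, and unitriangular matrices
modulo a power of `p` form a finite `p`-group.
-/

section ProPTopology

variable {G K : Type*} [Group G] [Group K] {p : ℕ}

/-- `N` is an open normal subgroup for the pro-`p` topology, i.e. it is normal of `p`-power index;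
these subgroups are the neighbourhood base at `1` over which `proPClosure` intersects. -/
structure IsProPOpenNormal (p : ℕ) (N : Subgroup G) : Prop where
  normal : N.Normal
  exists_index_eq : ∃ k : ℕ, N.index = p ^ k

theorem mem_proPClosure {H : Subgroup G} {x : G} :
    x ∈ proPClosure p H ↔ ∀ N, IsProPOpenNormal p N → x ∈ H ⊔ N := by
  simp only [proPClosure, Subgroup.mem_iInf, Set.mem_ofPred_eq]
  exact ⟨fun h N hN => h N ⟨hN.1, hN.2⟩, fun h N hN => h N ⟨hN.1, hN.2⟩⟩

theorem le_proPClosure (H : Subgroup G) : H ≤ proPClosure p H :=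
  le_iInf₂ fun _ _ => le_sup_left

theorem IsRetract.exists_eqLocus_eq {R : Subgroup G} (hR : IsRetract R) :
    ∃ r : G →* G, r.eqLocus (MonoidHom.id G) = R := by
  obtain ⟨r, hr, hfix⟩ := hR
  exact ⟨r, le_antisymm (fun x hx => hr ▸ ⟨x, hx⟩) hfix⟩

variable [Fact p.Prime]

theorem IsProPOpenNormal.comap {N : Subgroup K} (hN : IsProPOpenNormal p N) (f : G →* K) :
    IsProPOpenNormal p (N.comap f) := by
  obtain ⟨hnormal, k, hk⟩ := hN
  refine ⟨hnormal.comap f, ?_⟩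
  have hdvd : (N.comap f).index ∣ p ^ k := by
    rw [Subgroup.index_comap, ← hk]
    exact N.relIndex_dvd_index_of_normal f.range
  obtain ⟨j, -, hj⟩ := (Nat.dvd_prime_pow Fact.out).1 hdvd
  exact ⟨j, hj⟩

theorem IsProPOpenNormal.inf {M N : Subgroup G} (hM : IsProPOpenNormal p M)
    (hN : IsProPOpenNormal p N) : IsProPOpenNormal p (M ⊓ N) := by
  obtain ⟨hMnormal, k, hk⟩ := hM
  obtain ⟨hNnormal, j, hj⟩ := hN
  refine ⟨inferInstance, ?_⟩
  have hdvd : (M ⊓ N).index ∣ p ^ (k + j) := by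
    rw [← Subgroup.relIndex_mul_index (inf_le_right : M ⊓ N ≤ N), Subgroup.inf_relIndex_right,
      pow_add, ← hk, ← hj]
    exact mul_dvd_mul_right (M.relIndex_dvd_index_of_normal N) _
  obtain ⟨i, -, hi⟩ := (Nat.dvd_prime_pow Fact.out).1 hdvd
  exact ⟨i, hi⟩

theorem isProPOpenNormal_ker (f : G →* K) [Finite f.range] (hf : IsPGroup p f.range) :
    IsProPOpenNormal p f.ker :=
  ⟨inferInstance, by simpa only [Subgroup.index_ker] using IsPGroup.iff_card.1 hf⟩

theorem proPClosure_eqLocus (hK : proPClosure p (⊥ : Subgroup K) = ⊥) (f g : G →* K) :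
    proPClosure p (f.eqLocus g) = f.eqLocus g := by
  refine le_antisymm (fun x hx => ?_) (le_proPClosure _)
  suffices hbot : (f x)⁻¹ * g x ∈ proPClosure p (⊥ : Subgroup K) by
    rw [hK, Subgroup.mem_bot] at hbot
    exact inv_mul_eq_one.1 hbot
  refine mem_proPClosure.2 fun N hN => Subgroup.mem_sup_right ?_
  have hcomap := (hN.comap f).inf (hN.comap g)
  have := hcomap.normal
  obtain ⟨y, hy, z, ⟨hfz, hgz⟩, rfl⟩ :=
    Subgroup.mem_sup_of_normal_right.1 (mem_proPClosure.1 hx _ hcomap)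
  have hyz : (f (y * z))⁻¹ * g (y * z) = (f z)⁻¹ * g z := by
    rw [map_mul, map_mul, show f y = g y from hy]
    group
  exact hyz ▸ N.mul_mem (N.inv_mem hfz) hgz

theorem IsRetract.proPClosure_eq (hG : proPClosure p (⊥ : Subgroup G) = ⊥) {R : Subgroup G}
    (hR : IsRetract R) : proPClosure p R = R := by
  obtain ⟨r, rfl⟩ := hR.exists_eqLocus_eq
  exact proPClosure_eqLocus hG r (MonoidHom.id G)

end ProPTopology

section Unitriangular

theorem exists_one_add_pow_prime_pow_eq_one {A : Type*} [Ring A] {p : ℕ} [Fact p.Prime]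
    (hp : IsNilpotent (p : A)) {a : A} (ha : IsNilpotent a) : ∃ t : ℕ, (1 + a) ^ p ^ t = 1 := by
  obtain ⟨s, hs⟩ := hp
  obtain ⟨m, hm⟩ := ha
  have hm' : a ^ p ^ m = 0 := pow_eq_zero_of_le (Nat.lt_pow_self (Fact.out : p.Prime).one_lt).le hm
  have hdvd : (p : Polynomial ℤ) ∣ (1 + Polynomial.X) ^ p ^ m - (1 + Polynomial.X ^ p ^ m) := by
    obtain ⟨r, hr⟩ :=
      exists_add_pow_prime_pow_eq (Fact.out : p.Prime) (1 : Polynomial ℤ) Polynomial.X m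
    rw [hr, one_pow, add_sub_cancel_left]
    simp only [mul_assoc, dvd_mul_right]
  obtain ⟨q, hq⟩ := dvd_sub_pow_of_dvd_sub hdvd s
  have hlift : ((1 + a) ^ p ^ m) ^ p ^ s - (1 + a ^ p ^ m) ^ p ^ s =
      (p : A) ^ (s + 1) * Polynomial.aeval a q := by
    simpa only [map_sub, map_pow, map_add, map_mul, map_one, map_natCast, Polynomial.aeval_X]
      using congrArg (Polynomial.aeval a) hq
  refine ⟨m + s, ?_⟩
  rwa [hm', add_zero, one_pow, pow_succ, hs, zero_mul, zero_mul, sub_eq_zero, ← pow_mul,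
    ← pow_add] at hlift

variable {n R : Type*} [Fintype n] [LinearOrder n] [CommRing R]

theorem mul_apply_self_of_isUpperTriangular {M N : Matrix n n R} (hM : M.IsUpperTriangular)
    (hN : N.IsUpperTriangular) (i : n) : (M * N) i i = M i i * N i i := by
  rw [Matrix.mul_apply]
  refine Finset.sum_eq_single i (fun j _ hji => ?_) (by simp)
  rcases hji.lt_or_gt with hlt | hgt
  · rw [hM hlt, zero_mul]
  · rw [hN hgt, mul_zero]

theorem isNilpotent_of_isUpperTriangular_of_diag_eq_zero {M : Matrix n n R}
    (hM : M.IsUpperTriangular) (hdiag : ∀ i, M i i = 0) : IsNilpotent M := by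
  have hcharpoly : M.charpoly = Polynomial.X ^ Fintype.card n := by
    simp [Matrix.charpoly_of_isUpperTriangular M hM, hdiag]
  have hM0 := Matrix.aeval_self_charpoly M
  rw [hcharpoly, map_pow, Polynomial.aeval_X] at hM0
  exact ⟨_, hM0⟩

variable (n R) in
/-- The group of invertible upper triangular matrices with ones on the diagonal. -/
def unitriangularGroup : Subgroup (Matrix n n R)ˣ where
  carrier := {u | u.val.IsUpperTriangular ∧ ∀ i, u.val i i = 1}
  one_mem' := ⟨Matrix.blockTriangular_one, Matrix.one_apply_eq⟩
  mul_mem' := fun ⟨hu, hu1⟩ ⟨hv, hv1⟩ => ⟨hu.mul hv, fun i => by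
    rw [Units.val_mul, mul_apply_self_of_isUpperTriangular hu hv, hu1, hv1, one_mul]⟩
  inv_mem' := by
    rintro u ⟨hu, hu1⟩
    have := u.invertible
    have hinv : (u⁻¹).val.IsUpperTriangular := by
      rw [Matrix.coe_units_inv]
      exact Matrix.blockTriangular_inv_of_blockTriangular hu
    refine ⟨hinv, fun i => ?_⟩
    have hdiag := mul_apply_self_of_isUpperTriangular hu hinv i
    rwa [Units.mul_inv, Matrix.one_apply_eq, hu1, one_mul, eq_comm] at hdiag

theorem isPGroup_unitriangularGroup {p : ℕ} [Fact p.Prime] (hp : IsNilpotent (p : R)) :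
    IsPGroup p (unitriangularGroup n R) := by
  rintro ⟨u, hu, hu1⟩
  have hnil : IsNilpotent (u.val - 1) :=
    isNilpotent_of_isUpperTriangular_of_diag_eq_zero (hu.sub Matrix.blockTriangular_one) fun i => by
      rw [Matrix.sub_apply, hu1, Matrix.one_apply_eq, sub_self]
  have hp' : IsNilpotent (p : Matrix n n R) := by
    simpa only [map_natCast] using hp.map (algebraMap R (Matrix n n R))
  obtain ⟨t, ht⟩ := exists_one_add_pow_prime_pow_eq_one hp' hnil
  rw [add_sub_cancel] at ht
  exact ⟨t, Subtype.ext (Units.ext ht)⟩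

end Unitriangular

section Superdiagonal

variable {R : Type*} {k : ℕ}

/-- The square matrix with the entries of `w` just above the diagonal and zeros elsewhere. -/
def superdiagonal [Zero R] (w : Fin k → R) : Matrix (Fin (k + 1)) (Fin (k + 1)) R :=
  Matrix.of fun r => Fin.cons 0 fun i => if r = i.castSucc then w i else 0

theorem superdiagonal_apply_of_le [Zero R] (w : Fin k → R) {r c : Fin (k + 1)} (h : c ≤ r) :
    superdiagonal w r c = 0 := by
  cases c using Fin.cases with
  | zero => rfl
  | succ i => exact if_neg (Fin.castSucc_lt_succ.trans_le h).ne'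

section NonUnitalNonAssocSemiring

variable {m : Type*} [NonUnitalNonAssocSemiring R] (M : Matrix m (Fin (k + 1)) R) (w : Fin k → R)

theorem mul_superdiagonal_apply_zero (r : m) : (M * superdiagonal w) r 0 = 0 := by
  simp [Matrix.mul_apply, superdiagonal_apply_of_le]

theorem mul_superdiagonal_apply_succ (r : m) (i : Fin k) :
    (M * superdiagonal w) r i.succ = M r i.castSucc * w i := by
  simp [Matrix.mul_apply, superdiagonal]

theorem superdiagonal_mul_self {w : Fin k → R}
    (hw : ∀ i j : Fin k, i.succ = j.castSucc → w i * w j = 0) :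
    superdiagonal w * superdiagonal w = 0 := by
  ext r c
  cases c using Fin.cases with
  | zero => exact mul_superdiagonal_apply_zero _ _ _
  | succ j =>
    rw [mul_superdiagonal_apply_succ, Matrix.zero_apply]
    cases hj : j.castSucc using Fin.cases with
    | zero => rw [superdiagonal_apply_of_le w (Fin.zero_le r), zero_mul]
    | succ i =>
      change (if r = i.castSucc then w i else 0) * w j = 0
      rw [ite_mul, zero_mul, hw i j hj.symm, ite_self]

end NonUnitalNonAssocSemiring

end Superdiagonal

section Syllables

/-- When `a * a = 0`, the assignment `e ↦ 1 + e a` turns addition into multiplication. -/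
def oneAddZSMulHom {A : Type*} [Ring A] {a : A} (ha : a * a = 0) : Multiplicative ℤ →* A where
  toFun e := 1 + e.toAdd • a
  map_one' := by simp
  map_mul' e f := by
    simp only [toAdd_mul, add_smul, mul_add, add_mul, mul_one, one_mul, smul_mul_smul_comm, ha,
      smul_zero, add_zero, add_assoc]

theorem exists_reduced_syllables_prod_eq {α : Type*} (g : FreeGroup α) :
    ∃ l : List (α × ℤ), l.IsChain (fun s t => s.1 ≠ t.1) ∧ (∀ s ∈ l, s.2 ≠ 0) ∧
      (l.map fun s => FreeGroup.of s.1 ^ s.2).prod = g := by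
  classical
  let toCoprod : FreeGroup α →* Monoid.CoprodI fun _ : α => Multiplicative ℤ :=
    FreeGroup.lift fun x => Monoid.CoprodI.of (i := x) (Multiplicative.ofAdd 1)
  let ofCoprod : Monoid.CoprodI (fun _ : α => Multiplicative ℤ) →* FreeGroup α :=
    Monoid.CoprodI.lift fun x => zpowersHom _ (FreeGroup.of x)
  have hleft : ofCoprod.comp toCoprod = MonoidHom.id _ := by
    ext x
    simp [toCoprod, ofCoprod]
  let w := Monoid.CoprodI.Word.equiv (toCoprod g)
  have hw : w.prod = toCoprod g := Monoid.CoprodI.Word.equiv.symm_apply_apply _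
  refine ⟨w.toList.map fun s => (s.1, s.2.toAdd), ?_, ?_, ?_⟩
  · exact List.isChain_map _ |>.2 w.chain_ne
  · intro s hs
    obtain ⟨t, ht, rfl⟩ := List.mem_map.1 hs
    exact w.ne_one t ht
  · calc _ = ofCoprod w.prod := by
          simp [Monoid.CoprodI.Word.prod, map_list_prod, ofCoprod, Function.comp_def]
      _ = g := by rw [hw]; exact DFunLike.congr_fun hleft g

variable {α R : Type*} [DecidableEq α] [CommRing R] {l : List (α × ℤ)}

variable (R l) in
/-- The matrix `N x` with a `1` in position `(i, i + 1)` whenever the `i`-th syllable of `l` is a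
power of `x`, and zeros elsewhere. -/
def syllableMatrix (x : α) : Matrix (Fin (l.length + 1)) (Fin (l.length + 1)) R :=
  superdiagonal fun i => if l[i].1 = x then 1 else 0

theorem syllableMatrix_mul_self (hl : l.IsChain fun s t => s.1 ≠ t.1) (x : α) :
    syllableMatrix R l x * syllableMatrix R l x = 0 := by
  refine superdiagonal_mul_self fun i j hij => ?_
  have hj : (j : ℕ) = i + 1 := by simpa using (congrArg Fin.val hij).symm
  have hne : l[i].1 ≠ l[j].1 := by
    simpa [hj] using List.isChain_iff_getElem.1 hl i (by omega)
  by_cases hi : l[i].1 = x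
  · have hj : l[j].1 ≠ x := fun h => hne (hi.trans h.symm)
    rw [if_neg hj, mul_zero]
  · rw [if_neg hi, zero_mul]

variable (R) in
/-- The representation of the free group sending `x ^ e` to `1 + e N x`, for `N` the family
`syllableMatrix R l`. -/
def syllableRep (hl : l.IsChain fun s t => s.1 ≠ t.1) :
    FreeGroup α →* (Matrix (Fin (l.length + 1)) (Fin (l.length + 1)) R)ˣ :=
  FreeGroup.lift fun x =>
    (oneAddZSMulHom (syllableMatrix_mul_self hl x)).toHomUnits (Multiplicative.ofAdd 1)

theorem syllableRep_of_zpow (hl : l.IsChain fun s t => s.1 ≠ t.1) (x : α) (e : ℤ) :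
    (syllableRep R hl (FreeGroup.of x ^ e)).val = 1 + e • syllableMatrix R l x := by
  rw [map_zpow, syllableRep, FreeGroup.lift_apply_of, ← map_zpow, MonoidHom.coe_toHomUnits,
    ← ofAdd_zsmul, zsmul_one, Int.cast_id]
  rfl

theorem range_syllableRep_le (hl : l.IsChain fun s t => s.1 ≠ t.1) :
    (syllableRep R hl).range ≤ unitriangularGroup _ R := by
  refine FreeGroup.range_lift_le ?_
  rintro _ ⟨x, rfl⟩
  have hN {r c : Fin (l.length + 1)} (h : c ≤ r) : ((1 : ℤ) • syllableMatrix R l x) r c = 0 := by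
    rw [one_smul]
    exact superdiagonal_apply_of_le _ h
  refine ⟨Matrix.blockTriangular_one.add fun _ _ h => hN h.le, fun i => ?_⟩
  change (1 : Matrix _ _ R) i i + ((1 : ℤ) • syllableMatrix R l x) i i = 1
  rw [Matrix.one_apply_eq, hN le_rfl, add_zero]

theorem mul_syllableRep_of_zpow_apply_succ (hl : l.IsChain fun s t => s.1 ≠ t.1) {m : Type*}
    (M : Matrix m (Fin (l.length + 1)) R) (x : α) (e : ℤ) (r : m) (i : Fin l.length) :
    (M * (syllableRep R hl (FreeGroup.of x ^ e)).val) r i.succ =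
      M r i.succ + e * if l[i].1 = x then M r i.castSucc else 0 := by
  rw [syllableRep_of_zpow, Matrix.mul_add, Matrix.mul_one, Matrix.mul_smul, Matrix.add_apply,
    Matrix.smul_apply, syllableMatrix, mul_superdiagonal_apply_succ, mul_ite, mul_one, mul_zero,
    zsmul_eq_mul]

theorem syllableRep_prod_take_apply (hl : l.IsChain fun s t => s.1 ≠ t.1) {j : ℕ}
    (hj : j ≤ l.length) {c : Fin (l.length + 1)} (hc : j ≤ c) :
    (syllableRep R hl ((l.take j).map fun s => FreeGroup.of s.1 ^ s.2).prod).val 0 c =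
      if (c : ℕ) = j then ((((l.take j).map Prod.snd).prod : ℤ) : R) else 0 := by
  induction j generalizing c with
  | zero => simp [Matrix.one_apply, eq_comm (a := (0 : Fin (l.length + 1)))]
  | succ j ih =>
    obtain ⟨i, rfl⟩ := Fin.exists_succ_eq_of_ne_zero (show c ≠ 0 by rintro rfl; simp at hc)
    have hji : j ≤ i := by simpa using hc
    have hsucc := ih (c := i.succ) (by omega) (by simp; omega)
    have hcast := ih (c := i.castSucc) (by omega) (by simpa using hji)
    rw [if_neg (by simp; omega)] at hsucc
    rw [List.take_succ_eq_append_getElem hj, List.map_append, List.prod_append, List.map_append,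
      List.prod_append, List.map_singleton, List.prod_singleton, List.map_singleton,
      List.prod_singleton, map_mul, Units.val_mul, mul_syllableRep_of_zpow_apply_succ, hsucc,
      hcast, zero_add]
    by_cases hij : (i : ℕ) = j
    · simp [hij, mul_comm]
    · simp [hij]

theorem syllableRep_prod_ne_one (hl : l.IsChain fun s t => s.1 ≠ t.1) (hnil : l ≠ [])
    (hprod : (((l.map Prod.snd).prod : ℤ) : R) ≠ 0) :
    syllableRep R hl (l.map fun s => FreeGroup.of s.1 ^ s.2).prod ≠ 1 := by
  intro h
  have hcorner := syllableRep_prod_take_apply (R := R) hl le_rfl (c := Fin.last _) le_rfl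
  rw [List.take_length, h, Fin.val_last, if_pos rfl, Units.val_one, Matrix.one_apply_ne] at hcorner
  · exact hprod hcorner.symm
  · simpa [Fin.ext_iff, eq_comm] using hnil

end Syllables

theorem exists_intCast_zmod_pow_ne_zero {m : ℕ} (hm : 1 < m) {d : ℤ} (hd : d ≠ 0) :
    ∃ s : ℕ, (d : ZMod (m ^ s)) ≠ 0 := by
  refine ⟨d.natAbs, fun h => ?_⟩
  rw [ZMod.intCast_zmod_eq_zero_iff_dvd, Int.natCast_dvd] at h
  exact (Nat.lt_pow_self hm).not_ge (Nat.le_of_dvd (Int.natAbs_pos.2 hd) h)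

theorem proPClosure_bot_freeGroup {α : Type*} {p : ℕ} [Fact p.Prime] :
    proPClosure p (⊥ : Subgroup (FreeGroup α)) = ⊥ := by
  classical
  refine le_antisymm (fun g hg => ?_) bot_le
  obtain ⟨l, hl, hne, rfl⟩ := exists_reduced_syllables_prod_eq g
  obtain ⟨s, hs⟩ : ∃ s : ℕ, (((l.map Prod.snd).prod : ℤ) : ZMod (p ^ s)) ≠ 0 :=
    exists_intCast_zmod_pow_ne_zero (Fact.out : p.Prime).one_lt (List.prod_ne_zero fun h => by
      obtain ⟨t, ht, ht0⟩ := List.mem_map.1 h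
      exact hne t ht ht0)
  have : NeZero (p ^ s) := ⟨pow_ne_zero s (Fact.out : p.Prime).ne_zero⟩
  have hp : IsNilpotent (p : ZMod (p ^ s)) := ⟨s, by rw [← Nat.cast_pow, ZMod.natCast_self]⟩
  let ρ := syllableRep (ZMod (p ^ s)) hl
  have hker : IsProPOpenNormal p ρ.ker :=
    isProPOpenNormal_ker ρ ((isPGroup_unitriangularGroup hp).to_le (range_syllableRep_le hl))
  have hρ : ρ (l.map fun s => FreeGroup.of s.1 ^ s.2).prod = 1 := by
    simpa only [bot_sup_eq, MonoidHom.mem_ker] using mem_proPClosure.1 hg _ hker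
  by_contra hg1
  exact syllableRep_prod_ne_one hl (by rintro rfl; simp at hg1) hs hρ

theorem retract_proP_closed_general {α : Type*} (p : ℕ) (hp : p.Prime)
    (R : Subgroup (FreeGroup α)) (hR : IsRetract R) : proPClosure p R = R :=
  have : Fact p.Prime := ⟨hp⟩
  hR.proPClosure_eq proPClosure_bot_freeGroup

theorem retract_proP_closed {n : ℕ} (hn : 2 ≤ n) (p : ℕ) (hp : p.Prime)
    (R : Subgroup (FreeGroup (Fin n))) (hR : IsRetract R) :
    proPClosure p R = R := by
  exact retract_proP_closed_general p hp R hR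
end

section
/- There exist a free group F of finite rank, a finitely generated subgroup H of F not contained in any proper retract of F, and a test element of H which is not a test element of F. -/
/-- A *test element* of a group `G` is an element fixed only by automorphisms:
every endomorphism of `G` fixing it is bijective. -/
def IsTestElement {G : Type*} [Group G] (g : G) : Prop :=
  ∀ φ : G →* G, φ g = g → Function.Bijective φ

/-! Write `F` for the free group on `a` and `b`, let `x = b⁻¹a⁻¹b`, `y = bab⁻¹`, `z = a⁻²ba²`, and
let `H` be the subgroup they generate, which is free on them. The element `u = x²y²z²` is the square
of `w = b⁻¹a⁻²b²a²`, and the endomorphism `a ↦ 1`, `b ↦ w` fixes `w`, so `u` is not a test element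
of `F`.

The other two claims rest on counting, modulo two, how often a path in the Schreier graph of a
subgroup `K` passes through a given edge, which restricts to a homomorphism `K → ℤˣ`.

* If an endomorphism `φ` of `H` fixes `u`, then `u` is a product of squares in `φ(H)`, so every
  homomorphism `φ(H) → ℤˣ` kills it. The edges ending at the base point then show that `φ(H)`
  contains the generators, so `φ` is onto, hence bijective since `H` is Hopfian.
* If `R` is a retract of `F`, then every homomorphism `R → ℤˣ` extends to `F`, and so takes the
  same value at all conjugates of `a` that lie in `R`. If `R` contains `x` and `y`, the edges
  labelled `a` thus give `b² ∈ R`. As homomorphisms `F → ℤˣ` kill squares, it follows in the same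
  way that `b ∈ R`, and then `a ∈ R`.
-/

open Function MulAction
open FreeGroup (of lift mk)

section ResiduallyFinite

theorem exists_perm_extending_mul_left {G : Type*} [Group G] (T : Set G) [Finite T] (g : G) :
    ∃ σ : Equiv.Perm T, ∀ s : T, g * s ∈ T → (σ s : G) = g * s := by
  classical
  have := Fintype.ofFinite T
  let e : {s : T // g * s ∈ T} ≃ {s : T // g⁻¹ * s ∈ T} :=
    { toFun s := ⟨⟨_, s.2⟩, by simp⟩
      invFun s := ⟨⟨_, s.2⟩, by simp⟩
      left_inv s := by simp
      right_inv s := by simp }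
  exact ⟨e.extendSubtype, fun s hs => congrArg Subtype.val (e.extendSubtype_apply_of_mem s hs)⟩

variable {α : Type*}

theorem lift_perm_mk_apply_one {T : Set (FreeGroup α)} {σ : α → Equiv.Perm T}
    (hσ : ∀ a, ∀ s : T, of a * (s : FreeGroup α) ∈ T → (σ a s : FreeGroup α) = of a * s)
    (h1 : 1 ∈ T) {l : List (α × Bool)} (hl : ∀ l', l' <:+ l → mk l' ∈ T) :
    (lift σ (mk l) ⟨1, h1⟩ : FreeGroup α) = mk l := by
  induction l with
  | nil => simp [← FreeGroup.one_eq_mk]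
  | cons p l ih =>
    have ih := ih fun l' h => hl l' (h.trans (List.suffix_cons p l))
    have hcons := hl _ List.suffix_rfl
    obtain ⟨a, _ | _⟩ := p
    · have hmk : mk ((a, false) :: l) = (of a)⁻¹ * mk l := rfl
      rw [hmk] at hcons ⊢
      have hstep : σ a ⟨_, hcons⟩ = lift σ (mk l) ⟨1, h1⟩ := by
        ext1
        rw [hσ a, ih, mul_inv_cancel_left]
        simpa using hl l (List.suffix_cons _ l)
      rw [map_mul, map_inv, Equiv.Perm.mul_apply, FreeGroup.lift_apply_of, ← hstep,
        Equiv.Perm.inv_def, Equiv.symm_apply_apply]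
    · have hmk : mk ((a, true) :: l) = of a * mk l := rfl
      rw [hmk] at hcons ⊢
      rw [map_mul, Equiv.Perm.mul_apply, FreeGroup.lift_apply_of, hσ a, ih]
      rwa [ih]

instance freeGroup_residuallyFinite : Group.ResiduallyFinite (FreeGroup α) := by
  classical
  refine Group.residuallyFinite_of_forall_exists_finite_monoidHom fun w hw => ?_
  let T : Set (FreeGroup α) := mk '' {l | l ∈ w.toWord.tails}
  have : Finite T := (List.finite_toSet w.toWord.tails).image mk
  have hT {l : List (α × Bool)} (hl : l <:+ w.toWord) : mk l ∈ T :=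
    ⟨l, (List.mem_tails _ _).2 hl, rfl⟩
  choose σ hσ using fun a : α => exists_perm_extending_mul_left T (of a)
  refine ⟨Equiv.Perm T, inferInstance, inferInstance, lift σ, fun hfix => hw ?_⟩
  have horbit := lift_perm_mk_apply_one hσ (hT List.nil_suffix) fun _ => hT
  rw [FreeGroup.mk_toWord, hfix] at horbit
  exact horbit.symm

end ResiduallyFinite

theorem finite_monoidHom_of_fg {G M : Type*} [Group G] [Group.FG G] [Monoid M] [Finite M] :
    Finite (G →* M) := by
  obtain ⟨S, hS⟩ := Group.fg_def.1 ‹Group.FG G›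
  exact Finite.of_injective (fun f : G →* M => fun s : S => f s) fun f g h =>
    MonoidHom.eq_of_eqOn_dense hS fun s hs => congrFun h ⟨s, hs⟩

/-- **Malcev's theorem**: finitely generated residually finite groups are Hopfian. -/
theorem injective_of_surjective_of_residuallyFinite {G : Type*} [Group G] [Group.FG G]
    [Group.ResiduallyFinite G] {φ : G →* G} (hφ : Surjective φ) : Injective φ := by
  rw [injective_iff_map_eq_one]
  intro g hg
  refine Group.eq_one_iff_forall_finiteIndexNormalSubroup g fun N => ?_
  have : Finite (G →* G ⧸ N.toSubgroup) := finite_monoidHom_of_fg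
  have hcomp : Injective fun f : G →* G ⧸ N.toSubgroup => f.comp φ :=
    fun _ _ h => (MonoidHom.cancel_right hφ).1 h
  obtain ⟨f, hf⟩ := Finite.surjective_of_injective hcomp (QuotientGroup.mk' N.toSubgroup)
  have : QuotientGroup.mk' N.toSubgroup g = 1 := by
    rw [← hf, MonoidHom.comp_apply, hg, f.map_one]
  exact (QuotientGroup.eq_one_iff g).1 this

section Cocycle

variable {α V G : Type*}

open Classical in
/-- The indicator of the edge of the Schreier graph which spells `a` and ends at `v`, with values in
the group `ℤˣ` of order two. -/
noncomputable def edgeIndicator (a : α) (v : V) : α → V → ℤˣ :=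
  Pi.mulSingle a (Pi.mulSingle v (-1))

theorem edgeIndicator_self (a : α) (v : V) : edgeIndicator a v a v = -1 := by
  simp [edgeIndicator]

theorem edgeIndicator_of_ne {v v' : V} (a : α) (hv : v' ≠ v) : edgeIndicator a v a v' = 1 := by
  simp [edgeIndicator, hv]

theorem edgeIndicator_of_label_ne {a a' : α} (v : V) (ha : a' ≠ a) : edgeIndicator a v a' = 1 := by
  simp [edgeIndicator, ha]

variable [MulAction (FreeGroup α) V]

section Group

variable [Group G]

/-- The `1`-cocycle of a free group acting on `V`, with values in the functions `V → G`, which takes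
the value `c a` at the generator `a`. In the Schreier graph on `V`, with an edge labelled `c a v`
from `(of a)⁻¹ • v` to `v`, the element `cocycle c w v` is the product of the labels along the path
spelled by `w` which ends at `v`. -/
def cocycle (c : α → V → G) (w : FreeGroup α) : V → G :=
  ((lift fun a => ⟨c a, of a⟩ : FreeGroup α →* (V → G) ⋊[mulAutArrow] FreeGroup α) w).left

variable (c : α → V → G)

@[simp]
theorem cocycle_of (a : α) : cocycle c (of a) = c a := by
  simp [cocycle]

@[simp]
theorem cocycle_one : cocycle c 1 = 1 := by
  simp [cocycle]

theorem cocycle_mul (w w' : FreeGroup α) (v : V) :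
    cocycle c (w * w') v = cocycle c w v * cocycle c w' (w⁻¹ • v) := by
  let f : FreeGroup α →* (V → G) ⋊[mulAutArrow] FreeGroup α := lift fun a => ⟨c a, of a⟩
  have hright : (f w).right = w :=
    DFunLike.congr_fun (FreeGroup.ext_hom _ (MonoidHom.id _) (by simp [f]) :
      SemidirectProduct.rightHom.comp f = MonoidHom.id _) w
  change (f (w * w')).left v = (f w).left v * (f w').left (w⁻¹ • v)
  rw [map_mul, SemidirectProduct.mul_left, hright]
  rfl

theorem cocycle_inv (w : FreeGroup α) (v : V) :
    cocycle c w⁻¹ v = (cocycle c w (w • v))⁻¹ := by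
  have h := cocycle_mul c w⁻¹ w v
  rw [inv_mul_cancel, inv_inv, cocycle_one] at h
  exact eq_inv_of_mul_eq_one_left h.symm

/-- The homomorphism by which `cocycle c` restricts to a subgroup fixing `v`. -/
def cocycleHom {K : Subgroup (FreeGroup α)} {v : V} (hK : K ≤ stabilizer (FreeGroup α) v) :
    K →* G where
  toFun k := cocycle c k v
  map_one' := by simp
  map_mul' k k' := by
    have hfix : (k : FreeGroup α)⁻¹ • v = v := hK (K.inv_mem k.2)
    rw [Subgroup.coe_mul, cocycle_mul, hfix]

end Group

theorem cocycle_conj_of [CommGroup G] (c : α → V → G) {a : α} {w : FreeGroup α} {v : V}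
    (hv : (w * of a * w⁻¹) • v = v) : cocycle c (w * of a * w⁻¹) v = c a (w⁻¹ • v) := by
  have hv' : (w * of a)⁻¹ • v = w⁻¹ • v := by
    rw [inv_smul_eq_iff, ← mul_smul, hv]
  rw [cocycle_mul, hv', cocycle_inv, smul_inv_smul, cocycle_mul, cocycle_of, mul_inv_cancel_comm]

theorem cocycle_edgeIndicator_of_sq {a : α} {v : V} (hv : of a • v ≠ v) :
    cocycle (edgeIndicator a v) (of a ^ 2) v = -1 := by
  have hv' : (of a)⁻¹ • v ≠ v := fun h => hv (inv_smul_eq_iff.1 h).symm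
  rw [pow_two, cocycle_mul, cocycle_of, edgeIndicator_self, edgeIndicator_of_ne a hv', mul_one]

end Cocycle

theorem smul_coset_one_eq_iff {G : Type*} [Group G] {K : Subgroup G} {g : G} :
    g • ((1 : G) : G ⧸ K) = (1 : G) ↔ g ∈ K := by
  rw [← mem_stabilizer_iff, stabilizer_quotient]

section Retract

theorem IsRetract.exists_extension {G M : Type*} [Group G] [Monoid M] {R : Subgroup G}
    (hR : IsRetract R) (f : R →* M) : ∃ g : G →* M, ∀ x : R, g x = f x := by
  obtain ⟨r, rfl, hfix⟩ := hR
  exact ⟨f.comp r.rangeRestrict, fun x => congrArg f (Subtype.ext (hfix x x.2))⟩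

variable {α : Type*} {R : Subgroup (FreeGroup α)}

theorem IsRetract.mul_inv_mem_of_conj_mem (hR : IsRetract R) {a : α} {v w : FreeGroup α}
    (hv : v * of a * v⁻¹ ∈ R) (hw : w * of a * w⁻¹ ∈ R) : v * w⁻¹ ∈ R := by
  let o : FreeGroup α ⧸ R := (1 : FreeGroup α)
  let c := edgeIndicator a (v⁻¹ • o)
  obtain ⟨g, hg⟩ := hR.exists_extension (cocycleHom c (stabilizer_quotient R).ge)
  have hconj {u : FreeGroup α} (hu : u * of a * u⁻¹ ∈ R) : g (of a) = c a (u⁻¹ • o) :=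
    calc g (of a) = g (u * of a * u⁻¹) := by rw [map_mul, map_mul, map_inv, mul_inv_cancel_comm]
      _ = cocycle c (u * of a * u⁻¹) o := hg ⟨_, hu⟩
      _ = c a (u⁻¹ • o) := cocycle_conj_of c (smul_coset_one_eq_iff.2 hu)
  have hends : w⁻¹ • o = v⁻¹ • o := by
    by_contra hne
    have : (-1 : ℤˣ) = 1 :=
      calc (-1 : ℤˣ) = c a (v⁻¹ • o) := (edgeIndicator_self a _).symm
        _ = c a (w⁻¹ • o) := (hconj hv).symm.trans (hconj hw)
        _ = 1 := edgeIndicator_of_ne a hne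
    exact absurd this (by decide)
  rw [← smul_coset_one_eq_iff, mul_smul, hends, smul_inv_smul]

theorem IsRetract.of_mem_of_sq_mem (hR : IsRetract R) {a : α} (ha : of a ^ 2 ∈ R) :
    of a ∈ R := by
  by_contra hmem
  let o : FreeGroup α ⧸ R := (1 : FreeGroup α)
  let c := edgeIndicator a o
  obtain ⟨g, hg⟩ := hR.exists_extension (cocycleHom c (stabilizer_quotient R).ge)
  have : (1 : ℤˣ) = -1 :=
    calc (1 : ℤˣ) = g (of a ^ 2) := by rw [map_pow, Int.units_sq]
      _ = cocycle c (of a ^ 2) o := hg ⟨_, ha⟩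
      _ = -1 := cocycle_edgeIndicator_of_sq (mt smul_coset_one_eq_iff.1 hmem)
  exact absurd this (by decide)

end Retract

section SquaresWord

variable {α : Type*}

/-- The product of the squares of the generators listed in `l`. For a list of all the generators
it is the boundary word of a nonorientable surface. -/
def squaresWord (l : List α) : FreeGroup α :=
  (l.map fun a => of a ^ 2).prod

@[simp]
theorem squaresWord_cons (a : α) (l : List α) :
    squaresWord (a :: l) = of a ^ 2 * squaresWord l := by
  simp [squaresWord]

theorem map_squaresWord_eq_one (f : FreeGroup α →* ℤˣ) (l : List α) : f (squaresWord l) = 1 := by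
  induction l with
  | nil => simp [squaresWord]
  | cons a l ih => simp [ih, Int.units_sq]

theorem cocycle_squaresWord_eq_one {V G : Type*} [MulAction (FreeGroup α) V] [Group G]
    {c : α → V → G} {l : List α} (hc : ∀ a ∈ l, c a = 1) : cocycle c (squaresWord l) = 1 := by
  induction l with
  | nil => simp [squaresWord]
  | cons a l ih =>
    rw [List.forall_mem_cons] at hc
    ext v
    simp [pow_two, cocycle_mul, hc.1, ih hc.2]

theorem of_mem_of_squaresWord_mem {K : Subgroup (FreeGroup α)} {l : List α} (hl : l.Nodup)
    (hmem : squaresWord l ∈ K) (hK : ∀ f : K →* ℤˣ, f ⟨squaresWord l, hmem⟩ = 1) :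
    ∀ a ∈ l, of a ∈ K := by
  induction l with
  | nil => simp
  | cons a l ih =>
    obtain ⟨hal, hl⟩ := List.nodup_cons.1 hl
    have ha : of a ∈ K := by
      by_contra ha
      let o : FreeGroup α ⧸ K := (1 : FreeGroup α)
      let c := edgeIndicator a o
      have htail : cocycle c (squaresWord l) = 1 :=
        cocycle_squaresWord_eq_one fun b hb =>
          edgeIndicator_of_label_ne o (ne_of_mem_of_not_mem hb hal)
      have hword : cocycle c (squaresWord (a :: l)) o = -1 := by
        rw [squaresWord_cons, cocycle_mul, htail, Pi.one_apply, mul_one,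
          cocycle_edgeIndicator_of_sq (mt smul_coset_one_eq_iff.1 ha)]
      have := hword.symm.trans (hK (cocycleHom c (stabilizer_quotient K).ge))
      exact absurd this (by decide)
    have hmem' : squaresWord l ∈ K := by
      rwa [squaresWord_cons, K.mul_mem_cancel_left (K.pow_mem ha 2)] at hmem
    refine List.forall_mem_cons.2 ⟨ha, ih hl hmem' fun f => ?_⟩
    have hsplit : (⟨squaresWord (a :: l), hmem⟩ : K) = ⟨of a, ha⟩ ^ 2 * ⟨squaresWord l, hmem'⟩ :=
      Subtype.ext (squaresWord_cons a l)
    simpa only [hsplit, map_mul, map_pow, Int.units_sq, one_mul] using hK f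

theorem surjective_of_map_squaresWord_eq {l : List α} (hl : l.Nodup) (hall : ∀ a, a ∈ l)
    {φ : FreeGroup α →* FreeGroup α} (hφ : φ (squaresWord l) = squaresWord l) : Surjective φ := by
  have hmem : squaresWord l ∈ φ.range := ⟨_, hφ⟩
  have hof : ∀ a ∈ l, of a ∈ φ.range := by
    refine of_mem_of_squaresWord_mem hl hmem fun f => ?_
    have : (⟨squaresWord l, hmem⟩ : φ.range) = φ.rangeRestrict (squaresWord l) :=
      Subtype.ext hφ.symm
    rw [this]
    exact map_squaresWord_eq_one (f.comp φ.rangeRestrict) l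
  rw [← MonoidHom.range_eq_top, eq_top_iff, ← FreeGroup.closure_range_of, Subgroup.closure_le]
  rintro _ ⟨a, rfl⟩
  exact hof a (hall a)

theorem isTestElement_squaresWord {l : List α} (hl : l.Nodup) (hall : ∀ a, a ∈ l) :
    IsTestElement (squaresWord l) := by
  intro φ hφ
  have : Finite α := Finite.of_finite_univ (l.finite_toSet.subset fun a _ => hall a)
  have hsurj := surjective_of_map_squaresWord_eq hl hall hφ
  exact ⟨injective_of_surjective_of_residuallyFinite hsurj, hsurj⟩

end SquaresWord

theorem IsTestElement.map_mulEquiv {G G' : Type*} [Group G] [Group G'] (e : G ≃* G') {g : G}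
    (hg : IsTestElement g) : IsTestElement (e g) := by
  intro φ hφ
  have h := hg ((e.symm.toMonoidHom.comp φ).comp e.toMonoidHom) (by simp [hφ])
  simpa using h

section Counterexample

/-- The subgroup of the counterexample is the image of this homomorphism, which sends the generators
to `b⁻¹a⁻¹b`, `bab⁻¹`, `a⁻²ba²`, where `a` and `b` are the generators `0` and `1`. -/
def surfaceHom : FreeGroup (Fin 3) →* FreeGroup (Fin 2) :=
  lift ![(of 1)⁻¹ * (of 0)⁻¹ * of 1, of 1 * of 0 * (of 1)⁻¹, (of 0 ^ 2)⁻¹ * of 1 * of 0 ^ 2]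

/-- The square root `b⁻¹a⁻²b²a²` of the image under `surfaceHom` of the product of the squares of
the generators. -/
def rootWord : FreeGroup (Fin 2) :=
  (of 1)⁻¹ * (of 0 ^ 2)⁻¹ * of 1 ^ 2 * of 0 ^ 2

-- With `A = a⁻²`, this is `(b⁻¹Ab)(bA⁻¹b⁻¹)(Ab²A⁻¹) = (b⁻¹Ab²A⁻¹)²`.
theorem surfaceHom_squaresWord : surfaceHom (squaresWord (List.finRange 3)) = rootWord ^ 2 := by
  simp [squaresWord, surfaceHom, rootWord, List.finRange_succ, pow_two, mul_assoc]

theorem surfaceHom_injective : Injective surfaceHom := by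
  -- The Schreier graph of this action extends the Stallings graph of the range. The labels `c` put
  -- the three generators, up to inversion, on its three loops, so the cocycle inverts `surfaceHom`.
  let σ : Fin 2 → Equiv.Perm (Fin 5) := ![c[0, 3, 4], c[0, 1, 2]]
  let _ : MulAction (FreeGroup (Fin 2)) (Fin 5) := MulAction.compHom _ (lift σ)
  have hsmul (i : Fin 2) (j : Fin 5) : of i • j = ![![3, 1, 2, 4, 0], ![1, 2, 0, 3, 4]] i j := by
    change lift σ (of i) j = _
    rw [FreeGroup.lift_apply_of]
    decide +revert
  have hinv (i : Fin 2) (j : Fin 5) :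
      (of i)⁻¹ • j = ![![4, 1, 2, 0, 3], ![2, 0, 1, 3, 4]] i j := by
    rw [inv_smul_eq_iff, hsmul]
    decide +revert
  let c : Fin 2 → Fin 5 → FreeGroup (Fin 3) :=
    ![![1, (of 0)⁻¹, of 1, 1, 1], ![1, 1, 1, 1, of 2]]
  have hfix : surfaceHom.range ≤ stabilizer (FreeGroup (Fin 2)) (0 : Fin 5) := by
    refine FreeGroup.range_lift_le ?_
    rintro _ ⟨k, rfl⟩
    rw [SetLike.mem_coe, mem_stabilizer_iff]
    fin_cases k <;> simp [mul_smul, pow_two, hsmul, hinv]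
  have hleft : LeftInverse (cocycleHom c hfix) surfaceHom.rangeRestrict := by
    refine DFunLike.congr_fun (FreeGroup.ext_hom
      ((cocycleHom c hfix).comp surfaceHom.rangeRestrict) (MonoidHom.id _) fun k => ?_)
    change cocycle c (surfaceHom (of k)) 0 = of k
    fin_cases k <;>
      simp [surfaceHom, cocycle_mul, cocycle_inv, pow_two, mul_smul, hsmul, hinv, c]
  exact surfaceHom.rangeRestrict_injective_iff.1 hleft.injective

theorem not_isTestElement_rootWord_sq : ¬ IsTestElement (rootWord ^ 2) := by
  intro htest
  let φ : FreeGroup (Fin 2) →* FreeGroup (Fin 2) := lift ![1, rootWord]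
  have hfix : φ rootWord = rootWord := by
    conv_lhs => rw [rootWord]
    simp [φ, pow_two]
  have hφ : φ (of 0) = φ 1 := by simp [φ]
  exact FreeGroup.of_ne_one 0 ((htest φ (by rw [map_pow, hfix])).1 hφ)

theorem eq_top_of_isRetract_of_surfaceHom_range_le {R : Subgroup (FreeGroup (Fin 2))}
    (hR : IsRetract R) (hle : surfaceHom.range ≤ R) : R = ⊤ := by
  have hx : (of 1)⁻¹ * of 0 * (of 1)⁻¹⁻¹ ∈ R := by
    simpa [surfaceHom, mul_assoc] using R.inv_mem (hle ⟨of 0, rfl⟩)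
  have hy : of 1 * of 0 * (of 1)⁻¹ ∈ R := by
    simpa [surfaceHom] using hle ⟨of 1, rfl⟩
  have hb : of 1 ∈ R := hR.of_mem_of_sq_mem <| by
    simpa [pow_two] using hR.mul_inv_mem_of_conj_mem hy hx
  have ha : of 0 ∈ R := by
    rwa [R.mul_mem_cancel_right (R.inv_mem hb), R.mul_mem_cancel_left hb] at hy
  rw [eq_top_iff, ← FreeGroup.closure_range_of, Subgroup.closure_le]
  rintro _ ⟨i, rfl⟩
  fin_cases i
  exacts [ha, hb]

end Counterexample

theorem test_element_conjecture_fails :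
    ∃ (n : ℕ) (H : Subgroup (FreeGroup (Fin n))) (g : FreeGroup (Fin n)) (hg : g ∈ H),
      H.FG ∧ (∀ R : Subgroup (FreeGroup (Fin n)), IsRetract R → H ≤ R → R = ⊤) ∧
      IsTestElement (⟨g, hg⟩ : H) ∧ ¬ IsTestElement g := by
  refine ⟨2, surfaceHom.range, rootWord ^ 2, ⟨_, surfaceHom_squaresWord⟩, ?_,
    fun R => eq_top_of_isRetract_of_surfaceHom_range_le, ?_, not_isTestElement_rootWord_sq⟩
  · exact (Group.fg_iff_subgroup_fg _).1 (Group.fg_range _)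
  · have htest := isTestElement_squaresWord (List.nodup_finRange 3) List.mem_finRange
    convert htest.map_mulEquiv (MonoidHom.ofInjective surfaceHom_injective)
    exact Subtype.ext surfaceHom_squaresWord.symm
end
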